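/- For the weight a = (6,8,9) (the weight of the Q₁₀-singularity), there exist 3×3 matrices C and D with non-negative integer entries such that |det D| = 1, B_a = C·D, (6,8,9) = (1,1,1)·D, and f_C has an isolated critical point at the origin of ℂ³ (all partial derivatives of f_C vanish at 0, and there is a punctured neighborhood of 0 containing no critical point of f_C); moreover any such C satisfies |det C| = 24. -/

import Mathlib

open Matrix BigOperators

noncomputable section

/-- `f_C(x,y,z) = Σ_{i=1}^{3} x^{c_{i1}} y^{c_{i2}} z^{c_{i3}}` for a 3×3 matrix `C`
with non-negative integer entries. -/
def fC (C : Matrix (Fin 3) (Fin 3) ℕ) : (Fin 3 → ℂ) → ℂ :=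
  fun v => ∑ i : Fin 3, ∏ j : Fin 3, v j ^ C i j

/-- `φ_D(u₁,u₂,u₃) = (u₁^{d_{i1}} u₂^{d_{i2}} u₃^{d_{i3}})_{i=1}^{3}`. -/
def phiD (D : Matrix (Fin 3) (Fin 3) ℕ) : (Fin 3 → ℂ) → (Fin 3 → ℂ) :=
  fun u i => ∏ j : Fin 3, u j ^ D i j

/-- The matrix `B_a` with rows `(a₁+1,a₂,a₃)`, `(a₁,a₂+1,a₃)`, `(a₁,a₂,a₃+1)`. -/
def Bmat (a : Fin 3 → ℕ) : Matrix (Fin 3) (Fin 3) ℕ :=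
  fun i j => a j + if i = j then 1 else 0

/-- `G_a(u₁,u₂,u₃) = u₁^{a₁+1}u₂^{a₂}u₃^{a₃} + u₁^{a₁}u₂^{a₂+1}u₃^{a₃} + u₁^{a₁}u₂^{a₂}u₃^{a₃+1}`. -/
def Ga (a : Fin 3 → ℕ) : (Fin 3 → ℂ) → ℂ :=
  fun u => u 0 ^ (a 0 + 1) * u 1 ^ a 1 * u 2 ^ a 2
         + u 0 ^ a 0 * u 1 ^ (a 1 + 1) * u 2 ^ a 2
         + u 0 ^ a 0 * u 1 ^ a 1 * u 2 ^ (a 2 + 1)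

/-- `H_a(u₁,u₂,u₃) = u₁^{a₁}u₂^{a₂}u₃^{a₃}`. -/
def Ha (a : Fin 3 → ℕ) : (Fin 3 → ℂ) → ℂ :=
  fun u => u 0 ^ a 0 * u 1 ^ a 1 * u 2 ^ a 2

/-- Determinant of a matrix of natural numbers, computed over `ℤ`. -/
def detZ (M : Matrix (Fin 3) (Fin 3) ℕ) : ℤ :=
  (M.map (fun n : ℕ => (n : ℤ))).det

/-- `f` has an isolated critical point at the origin of `ℂ³`: the derivative of `f`
vanishes at `0`, and there is a punctured neighborhood of `0` containing no critical
point of `f`. -/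
def IsolatedCriticalAtZero (f : (Fin 3 → ℂ) → ℂ) : Prop :=
  fderiv ℂ f 0 = 0 ∧
  ∃ ε : ℝ, ε > 0 ∧ ∀ p : Fin 3 → ℂ, p ≠ 0 → ‖p‖ < ε → fderiv ℂ f p ≠ 0

lemma fC_hasFDerivAt (p : Fin 3 → ℂ) :
    HasFDerivAt (fC !![4, 0, 1; 0, 3, 0; 0, 0, 2])
      ((4 * p 0 ^ 3 * p 2) • (ContinuousLinearMap.proj 0 : (Fin 3 → ℂ) →L[ℂ] ℂ)
        + (3 * p 1 ^ 2) • (ContinuousLinearMap.proj 1 : (Fin 3 → ℂ) →L[ℂ] ℂ)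
        + (p 0 ^ 4 + 2 * p 2) • (ContinuousLinearMap.proj 2 : (Fin 3 → ℂ) →L[ℂ] ℂ)) p := by
  have e : fC !![4, 0, 1; 0, 3, 0; 0, 0, 2] =
      fun v : Fin 3 → ℂ => v 0 ^ 4 * v 2 + v 1 ^ 3 + v 2 ^ 2 := by
    funext v
    simp [fC, Fin.sum_univ_three, Fin.prod_univ_three]
  rw [e]
  have h0 : HasFDerivAt (fun v : Fin 3 → ℂ => v 0) (ContinuousLinearMap.proj 0) p :=
    hasFDerivAt_apply (𝕜 := ℂ) 0 p
  have h1 : HasFDerivAt (fun v : Fin 3 → ℂ => v 1) (ContinuousLinearMap.proj 1) p :=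
    hasFDerivAt_apply (𝕜 := ℂ) 1 p
  have h2 : HasFDerivAt (fun v : Fin 3 → ℂ => v 2) (ContinuousLinearMap.proj 2) p :=
    hasFDerivAt_apply (𝕜 := ℂ) 2 p
  refine (((h0.pow 4).mul h2).add (h1.pow 3) |>.add (h2.pow 2)).congr_fderiv ?_
  ext v
  simp
  ring

lemma fC_isolated : IsolatedCriticalAtZero (fC !![4, 0, 1; 0, 3, 0; 0, 0, 2]) := by
  refine ⟨?_, 1, one_pos, ?_⟩
  · rw [(fC_hasFDerivAt 0).fderiv]
    ext v
    simp
  · intro p hp _ h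
    rw [(fC_hasFDerivAt p).fderiv] at h
    have k0 := DFunLike.congr_fun h (Pi.single 0 1)
    have k1 := DFunLike.congr_fun h (Pi.single 1 1)
    have k2 := DFunLike.congr_fun h (Pi.single 2 1)
    simp at k0 k1 k2
    apply hp
    have hx : p 0 = 0 := by
      rcases k0 with k | k
      · exact k
      · simpa [k] using k2
    have hz : p 2 = 0 := by simpa [hx] using k2
    funext i
    fin_cases i
    · exact hx
    · exact k1
    · exact hz

theorem stmt_15 :
    (∃ C D : Matrix (Fin 3) (Fin 3) ℕ,
      |detZ D| = 1 ∧
      Bmat ![6, 8, 9] = C * D ∧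
      (∀ j, (∑ i : Fin 3, D i j) = ![6, 8, 9] j) ∧
      IsolatedCriticalAtZero (fC C)) ∧
    (∀ C D : Matrix (Fin 3) (Fin 3) ℕ,
      |detZ D| = 1 →
      Bmat ![6, 8, 9] = C * D →
      (∀ j, (∑ i : Fin 3, D i j) = ![6, 8, 9] j) →
      IsolatedCriticalAtZero (fC C) →
      |detZ C| = 24) := by
  refine ⟨⟨!![4, 0, 1; 0, 3, 0; 0, 0, 2], !![1, 1, 1; 2, 3, 3; 3, 4, 5], ?_, ?_, ?_,
    fC_isolated⟩, ?_⟩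
  · simp [detZ, Matrix.det_fin_three]
  · ext i j
    fin_cases i <;> fin_cases j <;> simp [Bmat, Matrix.mul_apply, Fin.sum_univ_three]
  · intro j
    fin_cases j <;> simp [Fin.sum_univ_three]
  · intro C D hD hB _ _
    have hm : detZ (C * D) = detZ C * detZ D := by
      unfold detZ
      rw [← Matrix.det_mul]
      exact congrArg Matrix.det (Matrix.map_mul (L := C) (M := D) (f := Nat.castRingHom ℤ))
    have hb : detZ (Bmat ![6, 8, 9]) = 24 := by
      simp [detZ, Matrix.det_fin_three, Bmat]
    rw [← hB, hb] at hm
    have := congrArg abs hm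
    rw [abs_mul, hD, mul_one] at this
    rw [← this]
    norm_num
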